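/- Duality bound for integrating a smooth function against a measure through a filter: Let μ be a finite complex Borel measure on 𝕋 = ℝ/2πℤ, let f : 𝕋 → ℂ be smooth (C^∞), and let φ : 𝕋 → ℂ be continuous with Fourier coefficients φ̂(n) = (1/2π)∫_𝕋 φ(θ)e^{−inθ}dθ all nonzero, such that Σ_{n∈ℤ} |f̂(−n)/φ̂(n)|² < ∞, where f̂(n) = (1/2π)∫_𝕋 f(θ)e^{−inθ}dθ. Define (μ∗φ)(θ) = ∫_𝕋 φ(θ − ω) dμ(ω). Then |∫_𝕋 f dμ| ≤ (Σ_{n∈ℤ} |f̂(−n)/φ̂(n)|²)^{1/2} · ((1/2π)∫_𝕋 |(μ∗φ)(θ)|² dθ)^{1/2}. -/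

import Mathlib

open MeasureTheory Real Complex

noncomputable section

/-- The circle `𝕋 = ℝ/2πℤ`. -/
abbrev T2 := AddCircle (2 * Real.pi)

instance : Fact (0 < 2 * Real.pi) := ⟨by positivity⟩

lemma parseval_cont (F : C(T2, ℂ)) :
    HasSum (fun n : ℤ => ‖fourierCoeff F n‖ ^ 2)
      (∫ t : T2, ‖F t‖ ^ 2 ∂AddCircle.haarAddCircle) := by
  have h := hasSum_sq_fourierCoeff (ContinuousMap.toLp (E := ℂ) 2 AddCircle.haarAddCircle ℂ F)
  simp_rw [fourierCoeff_toLp] at h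
  convert h using 1
  apply integral_congr_ae
  filter_upwards [ContinuousMap.coeFn_toLp (p := 2) (𝕜 := ℂ) AddCircle.haarAddCircle F] with x hx
  rw [hx]

lemma exists_norm_bound (F : T2 → ℂ) (hF : Continuous F) : ∃ C, ∀ x, ‖F x‖ ≤ C :=
  ⟨‖(⟨F, hF⟩ : C(T2, ℂ))‖, fun x => ContinuousMap.norm_coe_le_norm ⟨F, hF⟩ x⟩

lemma conv_cont (ν : Measure T2) [IsFiniteMeasure ν] (f : T2 → ℂ) (hf : Integrable f ν)
    (φ : T2 → ℂ) (hφ : Continuous φ) :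
    Continuous fun θ : T2 => ∫ ω : T2, φ (θ - ω) * f ω ∂ν := by
  obtain ⟨C, hC⟩ := exists_norm_bound φ hφ
  refine continuous_of_dominated (bound := fun ω => C * ‖f ω‖) ?_ ?_ (hf.norm.const_mul C) ?_
  · intro θ
    exact (hφ.comp (continuous_const.sub continuous_id)).aestronglyMeasurable.mul
      hf.aestronglyMeasurable
  · intro θ
    refine Filter.Eventually.of_forall fun ω => ?_
    rw [norm_mul]
    exact mul_le_mul_of_nonneg_right (hC _) (norm_nonneg _)
  · refine Filter.Eventually.of_forall fun ω => ?_
    fun_prop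

lemma inner_coeff (φ : T2 → ℂ) (n : ℤ) (ω : T2) :
    ∫ θ : T2, fourier (-n) θ * φ (θ - ω) ∂AddCircle.haarAddCircle
      = fourier (-n) ω * fourierCoeff φ n := by
  rw [← integral_add_right_eq_self (μ := AddCircle.haarAddCircle)
    (fun θ : T2 => fourier (-n) θ * φ (θ - ω)) ω]
  unfold fourierCoeff
  rw [← integral_const_mul]
  congr 1
  ext θ
  have : (fourier (-n) (θ + ω) : ℂ) = fourier (-n) θ * fourier (-n) ω := by
    simp only [fourier_apply, smul_add, AddCircle.toCircle_add, Circle.coe_mul]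
  rw [this, add_sub_cancel_right, smul_eq_mul]
  ring

lemma conv_coeff (ν : Measure T2) [IsFiniteMeasure ν] (f : T2 → ℂ) (hf : Integrable f ν)
    (φ : T2 → ℂ) (hφ : Continuous φ) (n : ℤ) :
    fourierCoeff (fun θ : T2 => ∫ ω : T2, φ (θ - ω) * f ω ∂ν) n
      = fourierCoeff φ n * ∫ ω : T2, fourier (-n) ω * f ω ∂ν := by
  obtain ⟨C, hC⟩ := exists_norm_bound φ hφ
  have e1 : fourierCoeff (fun θ : T2 => ∫ ω : T2, φ (θ - ω) * f ω ∂ν) n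
      = ∫ θ : T2, ∫ ω : T2, (fourier (-n) θ * φ (θ - ω)) * f ω ∂ν ∂AddCircle.haarAddCircle := by
    unfold fourierCoeff
    congr 1
    ext θ
    rw [smul_eq_mul, ← integral_const_mul]
    simp only [mul_assoc]
  rw [e1, integral_integral_swap]
  · simp_rw [integral_mul_const, inner_coeff]
    rw [← integral_const_mul]
    congr 1
    ext ω
    ring
  · have h2 : Integrable (fun z : T2 × T2 => f z.2) (AddCircle.haarAddCircle.prod ν) :=
      hf.comp_snd _
    refine h2.bdd_mul (c := C) (f := fun z : T2 × T2 => fourier (-n) z.1 * φ (z.1 - z.2)) ?_ ?_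
    · apply Continuous.aestronglyMeasurable
      fun_prop
    · refine Filter.Eventually.of_forall fun z => ?_
      have : ‖(fourier (-n) z.1 : ℂ)‖ = 1 := by rw [fourier_apply]; exact Circle.norm_coe _
      rw [norm_mul, this, one_mul]
      exact hC _

lemma cs_tsum (a b : ℤ → ℝ) (ha : ∀ n, 0 ≤ a n) (hb : ∀ n, 0 ≤ b n)
    (hA : Summable fun n => a n ^ 2) (hB : Summable fun n => b n ^ 2) :
    (Summable fun n => a n * b n) ∧
      ∑' n, a n * b n ≤ Real.sqrt (∑' n, a n ^ 2) * Real.sqrt (∑' n, b n ^ 2) := by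
  have h := Real.summable_and_inner_le_Lp_mul_Lq_tsum_of_nonneg
    Real.HolderConjugate.two_two ha hb
    (by simpa using hA) (by simpa using hB)
  simpa [Real.sqrt_eq_rpow] using h

/-- **Duality bound for integrating a smooth function against a measure through a filter.**
The finite complex Borel measure `μ` is represented as `dμ = f dν` with `ν` a finite
nonnegative measure and `f` an integrable complex density, so that `∫ g dμ = ∫ g·f dν`
and `(μ∗φ)(θ) = ∫ φ(θ − ω) f(ω) dν(ω)`. -/
theorem duality_bound_filter
    (ν : Measure T2) [IsFiniteMeasure ν] (f : T2 → ℂ) (hf : Integrable f ν)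
    (g : T2 → ℂ) (hg : ∃ G : ℝ → ℂ, ContDiff ℝ (⊤ : ℕ∞) G ∧ ∀ t : ℝ, g (t : T2) = G t)
    (φ : T2 → ℂ) (hφ : Continuous φ)
    (hφn : ∀ n : ℤ, fourierCoeff φ n ≠ 0)
    (hsum : Summable fun n : ℤ => ‖fourierCoeff g (-n) / fourierCoeff φ n‖ ^ 2) :
    ‖∫ θ : T2, g θ * f θ ∂ν‖ ≤
      Real.sqrt (∑' n : ℤ, ‖fourierCoeff g (-n) / fourierCoeff φ n‖ ^ 2) *
        Real.sqrt ((1 / (2 * π)) * ∫ θ : T2, ‖∫ ω : T2, φ (θ - ω) * f ω ∂ν‖ ^ 2) := by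
  have hgc : Continuous g := by
    obtain ⟨G, hG, hgG⟩ := hg
    refine (QuotientAddGroup.isQuotientMap_mk _).continuous_iff.2 ?_
    exact hG.continuous.congr fun t => (hgG t).symm
  set ψ : T2 → ℂ := fun θ => ∫ ω : T2, φ (θ - ω) * f ω ∂ν with hψ
  have hψc : Continuous ψ := conv_cont ν f hf φ hφ
  have hψs := parseval_cont ⟨ψ, hψc⟩
  have hφs := parseval_cont ⟨φ, hφ⟩
  simp only [ContinuousMap.coe_mk] at hψs hφs
  have hgs' : Summable fun n : ℤ => ‖fourierCoeff g (-n)‖ := by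
    refine (cs_tsum _ _ (fun n => norm_nonneg _) (fun n => norm_nonneg _) hsum
      hφs.summable).1.congr fun n => ?_
    rw [← norm_mul, div_mul_cancel₀ _ (hφn n)]
  have hgs : Summable fun n : ℤ => ‖fourierCoeff g n‖ := by
    refine ((Equiv.neg ℤ).summable_iff).1 ?_
    exact hgs'
  have hpt : ∀ x : T2, HasSum (fun n : ℤ => fourierCoeff g n • fourier n x) (g x) := fun x =>
    has_pointwise_sum_fourier_series_of_summable (f := ⟨g, hgc⟩) hgs.of_norm x
  have hno : ∀ (n : ℤ) (x : T2), ‖(fourier n x : ℂ)‖ = 1 := fun n x => by rw [fourier_apply]; exact Circle.norm_coe _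
  have hint : ∀ n : ℤ, Integrable (fun x : T2 => fourierCoeff g n * (fourier n x * f x)) ν := by
    intro n
    refine Integrable.const_mul ?_ _
    refine hf.bdd_mul (c := 1) (by apply Continuous.aestronglyMeasurable; fun_prop) ?_
    exact Filter.Eventually.of_forall fun x => (hno n x).le
  have hS := hasSum_integral_of_summable_integral_norm hint (by
    simp only [norm_mul, hno, one_mul, integral_const_mul]
    exact hgs.mul_right _)
  have e2 : ∀ x : T2, ∑' n : ℤ, fourierCoeff g n * (fourier n x * f x) = g x * f x := by
    intro x
    refine HasSum.tsum_eq ?_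
    refine ((hpt x).mul_right (f x)).congr_fun ?_
    intro n
    simp [mul_assoc]
  simp only [e2, integral_const_mul] at hS
  have hS' := ((Equiv.neg ℤ).hasSum_iff).2 hS
  have hterm : ∀ n : ℤ, ‖fourierCoeff g (-n) * ∫ x : T2, fourier (-n) x * f x ∂ν‖
      = ‖fourierCoeff g (-n) / fourierCoeff φ n‖ * ‖fourierCoeff ψ n‖ := by
    intro n
    rw [hψ, conv_coeff ν f hf φ hφ n, ← norm_mul, ← mul_assoc, div_mul_cancel₀ _ (hφn n)]
  obtain ⟨c1, c2⟩ := cs_tsum _ _ (fun n => norm_nonneg _) (fun n => norm_nonneg _) hsum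
    hψs.summable
  have hb : ∫ t : T2, ‖ψ t‖ ^ 2 ∂AddCircle.haarAddCircle
      = (1 / (2 * π)) * ∫ θ : T2, ‖ψ θ‖ ^ 2 := by
    rw [AddCircle.integral_haarAddCircle, smul_eq_mul, one_div]
  rw [← hb, ← hψs.tsum_eq, ← hS'.tsum_eq]
  refine le_trans (norm_tsum_le_tsum_norm ?_) (le_trans (le_of_eq ?_) c2)
  · exact c1.congr fun n => (hterm n).symm
  · exact tsum_congr fun n => hterm n

end
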